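/- Let n ∈ ℕ, p ∈ ℕ₀, 0 < α < 2, M = max(4p+4, n+1), and let ξ ∈ ℕ₀^n with |ξ|₁ ≤ p. Let Ψ ∈ C^∞(ℝ^n) be a radially symmetric cut-off with Ψ(x) = 0 for |x| ≤ 1/2 and Ψ(x) = 1 for |x| ≥ 1. Assume g ∈ C_c^N(ℝ^n) with N ≥ M and ∂^k g(0) = 0 for all 1 ≤ |k|₁ ≤ 2p+1. For k ∈ ℤ^n∖{0} choose j with |k_j| = max_{1≤l≤n}|k_l|, and define s_ξ(x) = x^{2ξ} x₁²/|x|^{n+α}, I_ξ(h,k) = ∫_{ℝ^n} e^{−2πi (k·x)/h} g(x) s_ξ(x) Ψ(x/h) dx, and W(ξ,k) = (−i)^M ∫_{ℝ^n} ∂_j^M(Ψ·s_ξ)(x) e^{−2πi k·x} dx (a finite quantity independent of h and of g). Then there exists C > 0, depending only on g and M, such that for all 0 < h ≤ 1 and all k ∈ ℤ^n∖{0}: | I_ξ(h,k) − g(0) W(ξ,k) h^{2|ξ|₁+2−α} (2π k_j)^{−M} | ≤ C |k|^{−M} ( h^{2p+4−α+2|ξ|₁} + h^M ). -/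

import Mathlib

open MeasureTheory Real

noncomputable def euclNorm {n : ℕ} (x : Fin n → ℝ) : ℝ := Real.sqrt (∑ j, x j ^ 2)

noncomputable def pd {n : ℕ} (j : Fin n) (f : (Fin n → ℝ) → ℝ) : (Fin n → ℝ) → ℝ :=
  fun x => fderiv ℝ f x (Pi.single j 1)

noncomputable def md {n : ℕ} (γ : Fin n → ℕ) (f : (Fin n → ℝ) → ℝ) : (Fin n → ℝ) → ℝ :=
  (List.finRange n).foldr (fun j g => (pd j)^[γ j] g) f

/-!
The substitution `x = h y` turns the integral into `h ^ (d + n)` times the Fourier transform at `k`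
of `g(h y) Ψ(y) s(y)`, where `d` is the degree of homogeneity of `s`, and `M` integrations by parts
in the direction `j` replace this function by its `M`-th derivative at the price of
`(2π k_j) ^ (-M)`. Splitting `g(h y) = g(0) + (g(h y) - g(0))`, the constant gives the main term.
Since the derivatives of `g` of orders `1, …, N - 1` vanish at the origin, `g(h y) - g(0)` is a
symbol of order `N` with constants `O(h ^ N)`, and `Ψ s` is a symbol of order `d`. Hence the `M`-th
derivative of `(g(h y) - g(0)) Ψ(y) s(y)` is `O(h ^ N (1 + |y|) ^ (N + d - M))`, which is integrable
as soon as `N + d + n < M`. Here `N = 2p + 2`.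
-/

open Filter Topology Asymptotics FourierTransform

section PartialDerivatives

variable {n : ℕ} {f : (Fin n → ℝ) → ℝ} {m : ℕ}

lemma contDiff_pd (j : Fin n) (hf : ContDiff ℝ (m + 1 : ℕ) f) : ContDiff ℝ m (pd j f) :=
  (hf.fderiv_right (by push_cast; rfl)).clm_apply contDiff_const

lemma contDiff_foldr_pd (L : List (Fin n)) (hf : ContDiff ℝ (m + L.length : ℕ) f) :
    ContDiff ℝ m (L.foldr pd f) := by
  induction L generalizing m with
  | nil => exact hf
  | cons a L ih => exact contDiff_pd a (ih (by rwa [add_assoc, add_comm 1]))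

lemma pd_comm (i j : Fin n) (hf : ContDiff ℝ 2 f) : pd i (pd j f) = pd j (pd i f) := by
  have hsecond (a b : Fin n) (x : Fin n → ℝ) :
      pd a (pd b f) x = fderiv ℝ (fderiv ℝ f) x (Pi.single a 1) (Pi.single b 1) := by
    have hdiff : DifferentiableAt ℝ (fderiv ℝ f) x :=
      (hf.fderiv_right (m := 1) one_add_one_eq_two.le).differentiable one_ne_zero x
    change fderiv ℝ (fun y => fderiv ℝ f y (Pi.single b 1)) x _ = _
    simp [fderiv_clm_apply hdiff (differentiableAt_const _)]
  ext x
  rw [hsecond, hsecond]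
  exact hf.contDiffAt.isSymmSndFDerivAt (by simp) _ _

lemma foldr_pd_eq_of_perm {L L' : List (Fin n)} (h : L.Perm L') (hf : ContDiff ℝ L.length f) :
    L.foldr pd f = L'.foldr pd f := by
  induction h with
  | nil => rfl
  | cons a _ ih =>
    exact congrArg (pd a) (ih (hf.of_le (by exact_mod_cast Nat.le_succ _)))
  | swap a b L => exact pd_comm b a (contDiff_foldr_pd (m := 2) L (by rwa [add_comm]))
  | trans h _ ih ih' => exact (ih hf).trans (ih' (h.length_eq ▸ hf))

lemma iterate_pd_eq_foldr (j : Fin n) (m : ℕ) (f : (Fin n → ℝ) → ℝ) :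
    (pd j)^[m] f = (List.replicate m j).foldr pd f := by
  induction m with
  | zero => rfl
  | succ m ih => rw [Function.iterate_succ_apply', ih, List.replicate_succ, List.foldr_cons]

lemma md_eq_foldr (γ : Fin n → ℕ) (f : (Fin n → ℝ) → ℝ) :
    md γ f = ((List.finRange n).flatMap fun j => List.replicate (γ j) j).foldr pd f := by
  simp only [md, List.foldr_flatMap, iterate_pd_eq_foldr]

lemma iteratedFDeriv_apply_single (hf : ContDiff ℝ m f) (v : Fin m → Fin n) (x : Fin n → ℝ) :
    iteratedFDeriv ℝ m f x (fun i => Pi.single (v i) 1) = (List.ofFn v).foldr pd f x := by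
  induction m generalizing x with
  | zero => simp
  | succ m ih =>
    have htail : (List.ofFn fun i => v i.succ).foldr pd f =
        fun y => iteratedFDeriv ℝ m f y fun i => Pi.single (v i.succ) 1 := by
      ext y
      exact (ih (hf.of_le (by exact_mod_cast m.le_succ)) _ y).symm
    have hdiff := hf.differentiable_iteratedFDeriv (by exact_mod_cast m.lt_succ_self) x
    rw [List.ofFn_succ, List.foldr_cons, htail, iteratedFDeriv_succ_apply_left, pd,
      (hdiff.hasFDerivAt.continuousMultilinear_apply_const _).fderiv]
    rfl

lemma iterate_pd_apply (hf : ContDiff ℝ m f) (j : Fin n) (x : Fin n → ℝ) :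
    (pd j)^[m] f x = iteratedFDeriv ℝ m f x fun _ => Pi.single j 1 := by
  rw [iteratedFDeriv_apply_single hf fun _ => j, List.ofFn_const, iterate_pd_eq_foldr]

lemma continuous_iterate_pd (hf : ContDiff ℝ m f) (j : Fin n) : Continuous ((pd j)^[m] f) := by
  rw [iterate_pd_eq_foldr]
  exact (contDiff_foldr_pd (m := 0) _ (by simpa using hf)).continuous

lemma norm_iterate_pd_le (hf : ContDiff ℝ m f) (j : Fin n) (x : Fin n → ℝ) :
    ‖(pd j)^[m] f x‖ ≤ ‖iteratedFDeriv ℝ m f x‖ := by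
  rw [iterate_pd_apply hf]
  exact (ContinuousMultilinearMap.le_opNorm _ _).trans_eq (by simp [Pi.norm_single])

lemma iterate_pd_add_const_mul {g : (Fin n → ℝ) → ℝ} (hf : ContDiff ℝ m f) (hg : ContDiff ℝ m g)
    (c : ℝ) (j : Fin n) :
    (pd j)^[m] (fun x => f x + c * g x) = fun x => (pd j)^[m] f x + c * (pd j)^[m] g x := by
  ext x
  have hcg : ContDiff ℝ m (c • g) := contDiff_const.smul hg
  rw [iterate_pd_apply (hf.add (contDiff_const.mul hg)), iterate_pd_apply hf, iterate_pd_apply hg]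
  change iteratedFDeriv ℝ m (f + c • g) x _ = _
  rw [iteratedFDeriv_add_apply hf.contDiffAt hcg.contDiffAt,
    iteratedFDeriv_const_smul_apply hg.contDiffAt]
  rfl

lemma perm_flatMap_replicate_count (L : List (Fin n)) :
    L.Perm ((List.finRange n).flatMap fun j => List.replicate (L.count j) j) := by
  refine List.perm_iff_count.mpr fun a => ?_
  have hcount : List.count a ∘ (fun j => List.replicate (L.count j) j) =
      fun j => if j = a then L.count a else 0 := by
    ext j
    rcases eq_or_ne j a with rfl | hj
    · simp
    · simp [List.count_replicate, hj]
  rw [List.count_flatMap, hcount, ← List.ofFn_eq_map, List.sum_ofFn]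
  simp

lemma iteratedFDeriv_eq_zero_of_md_eq_zero (hf : ContDiff ℝ m f) {x : Fin n → ℝ}
    (h : ∀ γ : Fin n → ℕ, ∑ j, γ j = m → md γ f x = 0) : iteratedFDeriv ℝ m f x = 0 := by
  refine ContinuousMultilinearMap.toMultilinearMap_injective <|
    Module.Basis.ext_multilinear (fun _ => Pi.basisFun ℝ (Fin n)) fun v => ?_
  have hsum : ∑ j, (List.ofFn v).count j = m := by
    simpa using Multiset.sum_count_eq_card (m := (List.ofFn v : Multiset (Fin n)))
      fun a _ => Finset.mem_univ a
  have hv : iteratedFDeriv ℝ m f x (fun i => Pi.single (v i) 1) = 0 := by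
    rw [iteratedFDeriv_apply_single hf, foldr_pd_eq_of_perm (perm_flatMap_replicate_count _)
      (by simpa using hf), ← md_eq_foldr, h _ hsum]
  simpa using hv

end PartialDerivatives

section SymbolBound

variable {E F : Type*} [NormedAddCommGroup E] [NormedSpace ℝ E]
  [NormedAddCommGroup F] [NormedSpace ℝ F] {f : E → F} {M N : ℕ} {d K : ℝ}

/-- The estimates of a symbol of order `d`, for derivatives of order at most `M`. The constant `K`
is explicit, and common to all orders, so that its dependence on a dilation of `f` can be
tracked. -/
def SymbolBound (M : ℕ) (d K : ℝ) (f : E → F) : Prop :=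
  ∀ m ≤ M, ∀ x, ‖iteratedFDeriv ℝ m f x‖ ≤ K * (1 + ‖x‖) ^ (d - m)

lemma SymbolBound.nonneg (hf : SymbolBound M d K f) : 0 ≤ K := by
  simpa using (norm_nonneg _).trans (hf 0 M.zero_le 0)

lemma SymbolBound.mul {A : Type*} [NormedRing A] [NormedAlgebra ℝ A] {f g : E → A} {d' K' : ℝ}
    (hf : ContDiff ℝ M f) (hfd : SymbolBound M d K f)
    (hg : ContDiff ℝ M g) (hgd : SymbolBound M d' K' g) :
    SymbolBound M (d + d') (2 ^ M * (K * K')) (fun x => f x * g x) := by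
  intro m hm x
  have hK := hfd.nonneg
  have hK' := hgd.nonneg
  have hterm : ∀ i ∈ Finset.range (m + 1),
      (m.choose i : ℝ) * ‖iteratedFDeriv ℝ i f x‖ * ‖iteratedFDeriv ℝ (m - i) g x‖ ≤
        m.choose i * (K * K' * (1 + ‖x‖) ^ (d + d' - m)) := by
    intro i hi
    have him : i ≤ m := Finset.mem_range_succ_iff.mp hi
    have hsplit : (1 + ‖x‖) ^ (d + d' - m) =
        (1 + ‖x‖) ^ (d - i) * (1 + ‖x‖) ^ (d' - (m - i : ℕ)) := by
      rw [← rpow_add (by positivity), Nat.cast_sub him]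
      ring_nf
    rw [mul_assoc, hsplit, mul_mul_mul_comm]
    gcongr
    · exact hfd i (him.trans hm) x
    · exact hgd (m - i) ((m.sub_le i).trans hm) x
  calc ‖iteratedFDeriv ℝ m (fun x => f x * g x) x‖
      ≤ ∑ i ∈ Finset.range (m + 1), (m.choose i : ℝ) * ‖iteratedFDeriv ℝ i f x‖ *
          ‖iteratedFDeriv ℝ (m - i) g x‖ :=
        norm_iteratedFDeriv_mul_le hf hg x (by exact_mod_cast hm)
    _ ≤ ∑ i ∈ Finset.range (m + 1), m.choose i * (K * K' * (1 + ‖x‖) ^ (d + d' - m)) :=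
        Finset.sum_le_sum hterm
    _ = 2 ^ m * (K * K') * (1 + ‖x‖) ^ (d + d' - m) := by
        rw [← Finset.sum_mul, ← Nat.cast_sum, Nat.sum_range_choose]
        push_cast
        ring
    _ ≤ 2 ^ M * (K * K') * (1 + ‖x‖) ^ (d + d' - m) := by
        gcongr
        norm_num

lemma iteratedFDeriv_comp_const_smul_of_ne_zero {t : ℝ} (ht : t ≠ 0) (f : E → F) (m : ℕ) (x : E) :
    iteratedFDeriv ℝ m (fun y => f (t • y)) x = t ^ m • iteratedFDeriv ℝ m f (t • x) := by
  let dilation : E ≃L[ℝ] E := ContinuousLinearEquiv.smulLeft (Units.mk0 t ht)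
  have h := dilation.iteratedFDerivWithin_comp_right f uniqueDiffOn_univ (Set.mem_univ (t • x)) m
  simp only [Set.preimage_univ, iteratedFDerivWithin_univ] at h
  ext v
  refine (congrArg (fun T => T v) h).trans ?_
  simp [dilation, ContinuousMultilinearMap.map_smul_univ, Units.smul_def]

lemma norm_iteratedFDeriv_le_mul_norm_pow (hf : ContDiff ℝ N f)
    (hK : ∀ x, ‖iteratedFDeriv ℝ N f x‖ ≤ K) (hf0 : ∀ m < N, iteratedFDeriv ℝ m f 0 = 0)
    {m : ℕ} (hm : m ≤ N) (x : E) :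
    ‖iteratedFDeriv ℝ m f x‖ ≤ K * ‖x‖ ^ (N - m) := by
  induction hm using Nat.decreasingInduction generalizing x with
  | self => simpa using hK x
  | of_succ m hm ih =>
    have hK0 : 0 ≤ K := (norm_nonneg _).trans (hK 0)
    have hderiv : ∀ y ∈ Metric.closedBall (0 : E) ‖x‖,
        ‖fderiv ℝ (iteratedFDeriv ℝ m f) y‖ ≤ K * ‖x‖ ^ (N - (m + 1)) := by
      intro y hy
      rw [norm_fderiv_iteratedFDeriv]
      have : ‖y‖ ≤ ‖x‖ := mem_closedBall_zero_iff.mp hy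
      exact (ih y).trans (by gcongr)
    have hmean := (convex_closedBall (0 : E) ‖x‖).norm_image_sub_le_of_norm_fderiv_le
      (fun y _ => hf.differentiable_iteratedFDeriv (by exact_mod_cast hm) y) hderiv
      (Metric.mem_closedBall_self (norm_nonneg x)) (mem_closedBall_zero_iff.mpr le_rfl)
    rw [hf0 m hm, sub_zero, sub_zero] at hmean
    rwa [show N - m = N - (m + 1) + 1 by lia, pow_succ, ← mul_assoc]

lemma iteratedFDeriv_sub_const {m : ℕ} (hm : m ≠ 0) (f : E → F) (c : F) :
    iteratedFDeriv ℝ m (fun x => f x - c) = iteratedFDeriv ℝ m f := by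
  obtain ⟨m, rfl⟩ := Nat.exists_eq_succ_of_ne_zero hm
  ext x v
  simp only [iteratedFDeriv_succ_apply_right, fderiv_sub_const]

lemma SymbolBound.norm_iteratedFDeriv_sub_const_le (hf : ContDiff ℝ M f)
    (hfd : SymbolBound M N K f) (hNM : N ≤ M)
    (hf0 : ∀ m, 1 ≤ m → m < N → iteratedFDeriv ℝ m f 0 = 0) (hN : 0 < N)
    {m : ℕ} (hm : m ≤ M) {h : ℝ} (hh : 0 < h) (hh1 : h ≤ 1) (x : E) :
    ‖iteratedFDeriv ℝ m (fun y => f y - f 0) x‖ ≤ K * (h + ‖x‖) ^ ((N : ℝ) - m) := by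
  have hK := hfd.nonneg
  rcases le_total m N with hmN | hNm
  · have hvanish : ∀ i < N, iteratedFDeriv ℝ i (fun y => f y - f 0) 0 = 0 := by
      intro i hi
      rcases Nat.eq_zero_or_pos i with rfl | hi0
      · ext; simp
      · rw [iteratedFDeriv_sub_const hi0.ne', hf0 i hi0 hi]
    have hbound : ∀ y, ‖iteratedFDeriv ℝ N (fun y => f y - f 0) y‖ ≤ K := fun y => by
      simpa [iteratedFDeriv_sub_const hN.ne'] using hfd N hNM y
    have hfN : ContDiff ℝ N (fun y => f y - f 0) :=
      (hf.of_le (by exact_mod_cast hNM)).sub contDiff_const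
    rw [← Nat.cast_sub hmN, rpow_natCast]
    refine (norm_iteratedFDeriv_le_mul_norm_pow hfN hbound hvanish hmN x).trans ?_
    gcongr
    linarith
  · rw [iteratedFDeriv_sub_const (by lia)]
    refine (hfd m hm x).trans (mul_le_mul_of_nonneg_left ?_ hK)
    exact rpow_le_rpow_of_nonpos (by positivity) (by linarith)
      (sub_nonpos.mpr (by exact_mod_cast hNm))

lemma SymbolBound.dilation_sub_const (hf : ContDiff ℝ M f)
    (hfd : SymbolBound M N K f) (hNM : N ≤ M)
    (hf0 : ∀ m, 1 ≤ m → m < N → iteratedFDeriv ℝ m f 0 = 0) (hN : 0 < N)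
    {h : ℝ} (hh : 0 < h) (hh1 : h ≤ 1) :
    SymbolBound M N (K * h ^ N) (fun x => f (h • x) - f 0) := by
  intro m hm x
  have hscale : h + ‖h • x‖ = h * (1 + ‖x‖) := by
    rw [norm_smul, norm_of_nonneg hh.le]
    ring
  have hpow : h ^ m * h ^ ((N : ℝ) - m) = h ^ N := by
    rw [← rpow_natCast, ← rpow_natCast, ← rpow_add hh, add_sub_cancel]
  calc ‖iteratedFDeriv ℝ m (fun x => f (h • x) - f 0) x‖
      = h ^ m * ‖iteratedFDeriv ℝ m (fun y => f y - f 0) (h • x)‖ := by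
        rw [iteratedFDeriv_comp_const_smul_of_ne_zero hh.ne' (fun y => f y - f 0), norm_smul,
          norm_of_nonneg (by positivity)]
    _ ≤ h ^ m * (K * (h + ‖h • x‖) ^ ((N : ℝ) - m)) := by
        gcongr
        exact hfd.norm_iteratedFDeriv_sub_const_le hf hNM hf0 hN hm hh hh1 (h • x)
    _ = K * h ^ N * (1 + ‖x‖) ^ ((N : ℝ) - m) := by
        rw [hscale, mul_rpow hh.le (by positivity), ← hpow]
        ring

lemma exists_forall_norm_le_of_isBigO_cocompact {X : Type*} [TopologicalSpace X]
    {u : X → F} {v : X → ℝ} (hu : Continuous u) (hv : Continuous v) (hv0 : ∀ x, 0 < v x)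
    (huv : u =O[cocompact X] v) : ∃ K, ∀ x, ‖u x‖ ≤ K * v x := by
  obtain ⟨C, hC⟩ := huv.bound
  obtain ⟨t, ht, htC⟩ := mem_cocompact.mp hC
  obtain ⟨C', hC'⟩ := ht.exists_bound_of_continuousOn
    (f := fun x => (v x)⁻¹ • u x) ((hv.inv₀ fun x => (hv0 x).ne').smul hu).continuousOn
  refine ⟨max C C', fun x => ?_⟩
  by_cases hx : x ∈ t
  · have hdiv := hC' x hx
    rw [norm_smul, norm_of_nonneg (inv_pos.mpr (hv0 x)).le, inv_mul_le_iff₀ (hv0 x)] at hdiv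
    rw [mul_comm]
    exact hdiv.trans (mul_le_mul_of_nonneg_left (le_max_right _ _) (hv0 x).le)
  · have hxC : ‖u x‖ ≤ C * ‖v x‖ := htC hx
    rw [norm_of_nonneg (hv0 x).le] at hxC
    exact hxC.trans (mul_le_mul_of_nonneg_right (le_max_left _ _) (hv0 x).le)

lemma exists_symbolBound_of_isBigO_cocompact (hf : ContDiff ℝ M f)
    (hO : ∀ m ≤ M, iteratedFDeriv ℝ m f =O[cocompact E] fun x => (1 + ‖x‖) ^ (d - m)) :
    ∃ K, SymbolBound M d K f := by
  have hbound : ∀ m ≤ M, ∃ K, ∀ x, ‖iteratedFDeriv ℝ m f x‖ ≤ K * (1 + ‖x‖) ^ (d - m) := by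
    intro m hm
    have hpos : ∀ x : E, 0 < 1 + ‖x‖ := fun x => by positivity
    exact exists_forall_norm_le_of_isBigO_cocompact
      (hf.continuous_iteratedFDeriv (by exact_mod_cast hm))
      ((continuous_const.add continuous_norm).rpow_const fun x => .inl (hpos x).ne')
      (fun x => rpow_pos_of_pos (hpos x) _) (hO m hm)
  choose! K hK using hbound
  obtain ⟨B, hB⟩ := ((Set.finite_Iic M).image K).bddAbove
  refine ⟨B, fun m hm x => (hK m hm x).trans ?_⟩
  gcongr
  exact hB (Set.mem_image_of_mem K hm)

lemma exists_symbolBound_of_hasCompactSupport (hf : ContDiff ℝ M f) (hfc : HasCompactSupport f)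
    (d : ℝ) : ∃ K, SymbolBound M d K f := by
  refine exists_symbolBound_of_isBigO_cocompact hf fun m _ => ?_
  have hzero := hasCompactSupport_iff_eventuallyEq.mp (hfc.iteratedFDeriv (𝕜 := ℝ) m)
  rw [coclosedCompact_eq_cocompact] at hzero
  exact hzero.trans_isBigO (isBigO_zero _ _)

lemma iteratedFDeriv_smul_of_homogeneous (hf : ∀ t : ℝ, 0 < t → ∀ x, f (t • x) = t ^ d • f x)
    {t : ℝ} (ht : 0 < t) (m : ℕ) {x : E} (hx : ContDiffAt ℝ m f x) :
    iteratedFDeriv ℝ m f (t • x) = t ^ (d - m) • iteratedFDeriv ℝ m f x := by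
  have h := iteratedFDeriv_comp_const_smul_of_ne_zero ht.ne' f m x
  rw [show (fun y => f (t • y)) = t ^ d • f from funext (hf t ht),
    iteratedFDeriv_const_smul_apply hx] at h
  rw [rpow_sub ht, rpow_natCast, div_eq_inv_mul, mul_smul, h, inv_smul_smul₀ (by positivity)]

lemma isBigO_iteratedFDeriv_of_homogeneous [ProperSpace E] {m : ℕ}
    (hf : ∀ x ≠ 0, ContDiffAt ℝ m f x)
    (hf_hom : ∀ t : ℝ, 0 < t → ∀ x, f (t • x) = t ^ d • f x) :
    iteratedFDeriv ℝ m f =O[cocompact E] fun x => (1 + ‖x‖) ^ (d - m) := by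
  let annulus : Set E := {u | 1 / 2 ≤ ‖u‖ ∧ ‖u‖ ≤ 1}
  have hcompact : IsCompact annulus := by
    refine (isCompact_closedBall (0 : E) 1).of_isClosed_subset ?_
      fun u hu => mem_closedBall_zero_iff.mpr hu.2
    exact (isClosed_le continuous_const continuous_norm).inter
      (isClosed_le continuous_norm continuous_const)
  have hcont : ContinuousOn (iteratedFDeriv ℝ m f) annulus := fun u hu =>
    ((hf u (norm_pos_iff.mp (by linarith [hu.1]))).continuousAt_iteratedFDeriv
      le_rfl).continuousWithinAt
  obtain ⟨C, hC⟩ := hcompact.exists_bound_of_continuousOn hcont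
  refine .of_bound C ?_
  filter_upwards [tendsto_norm_cocompact_atTop.eventually_ge_atTop 1] with x hx
  set t : ℝ := 1 + ‖x‖
  have ht : 0 < t := by positivity
  have hxt : x = t • t⁻¹ • x := (smul_inv_smul₀ ht.ne' x).symm
  have hnorm : ‖t⁻¹ • x‖ = ‖x‖ / t := by
    rw [norm_smul, norm_inv, norm_of_nonneg ht.le, inv_mul_eq_div]
  have hmem : t⁻¹ • x ∈ annulus := by
    constructor <;> rw [hnorm]
    · rw [div_le_div_iff₀ two_pos ht]
      linarith
    · rw [div_le_one ht]
      linarith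
  have hsmooth := hf (t⁻¹ • x) (norm_pos_iff.mp (by linarith [hmem.1]))
  rw [norm_of_nonneg (by positivity), mul_comm]
  nth_rw 1 [hxt]
  rw [iteratedFDeriv_smul_of_homogeneous hf_hom ht m hsmooth, norm_smul,
    norm_of_nonneg (by positivity)]
  gcongr
  exact hC _ hmem

lemma exists_symbolBound_of_eventuallyEq_homogeneous [ProperSpace E] {s : E → F}
    (hs : ∀ x ≠ 0, ContDiffAt ℝ M s x)
    (hs_hom : ∀ t : ℝ, 0 < t → ∀ x, s (t • x) = t ^ d • s x)
    (hf : ContDiff ℝ M f) (hfs : f =ᶠ[cocompact E] s) : ∃ K, SymbolBound M d K f := by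
  refine exists_symbolBound_of_isBigO_cocompact hf fun m hm => ?_
  obtain ⟨t, ht, hts⟩ := mem_cocompact.mp hfs
  have hderiv : iteratedFDeriv ℝ m f =ᶠ[cocompact E] iteratedFDeriv ℝ m s := by
    filter_upwards [ht.compl_mem_cocompact] with x hx
    have hnhds : f =ᶠ[𝓝 x] s := by
      filter_upwards [ht.isClosed.isOpen_compl.mem_nhds hx] with y hy using hts hy
    exact (hnhds.iteratedFDeriv ℝ m).eq_of_nhds
  exact hderiv.trans_isBigO <| isBigO_iteratedFDeriv_of_homogeneous
    (fun x hx => (hs x hx).of_le (by exact_mod_cast hm)) hs_hom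

end SymbolBound

section Fourier

variable {n m M : ℕ} {d K : ℝ} {f : (Fin n → ℝ) → ℝ}

/-- The bilinear form `x · k` on `ℝⁿ`; together with `VectorFourier` it gives the Fourier transform
on `Fin n → ℝ`, which carries no inner product in Mathlib. -/
noncomputable def dotCLM (n : ℕ) : (Fin n → ℝ) →L[ℝ] (Fin n → ℝ) →L[ℝ] ℝ :=
  ∑ l, (ContinuousLinearMap.proj l).smulRight (ContinuousLinearMap.proj l)

/-- The Fourier transform `k ↦ ∫ f(x) e^{-2πi k·x} dx` of a real function on `ℝⁿ`. -/
noncomputable def coordFourier (f : (Fin n → ℝ) → ℝ) (k : Fin n → ℝ) : ℂ :=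
  VectorFourier.fourierIntegral 𝐞 volume (dotCLM n).toLinearMap₁₂ (fun x => (f x : ℂ)) k

lemma dotCLM_apply (x k : Fin n → ℝ) : dotCLM n x k = ∑ l, k l * x l := by
  simp [dotCLM, mul_comm]

lemma coordFourier_apply (f : (Fin n → ℝ) → ℝ) (k : Fin n → ℝ) :
    coordFourier f k =
      ∫ x, (f x : ℂ) * Complex.exp (-2 * π * Complex.I * ∑ l, (k l : ℂ) * x l) := by
  refine integral_congr_ae (.of_forall fun x => ?_)
  change 𝐞 (-dotCLM n x k) • (f x : ℂ) = _
  rw [dotCLM_apply, Circle.smul_def, fourierChar_apply, smul_eq_mul, mul_comm]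
  congr 2
  push_cast
  ring

lemma coordFourier_inv_smul_apply (f : (Fin n → ℝ) → ℝ) (h : ℝ) (k : Fin n → ℝ) :
    coordFourier f (h⁻¹ • k) =
      ∫ x, Complex.exp (-2 * π * Complex.I * (∑ l, (k l : ℂ) * x l) / h) * f x := by
  rw [coordFourier_apply]
  congr 1 with x
  rw [mul_comm, mul_div_assoc, Finset.sum_div]
  congr! 4 with l
  simp only [Pi.smul_apply, smul_eq_mul, Complex.ofReal_mul, Complex.ofReal_inv]
  ring

lemma norm_coordFourier_le (f : (Fin n → ℝ) → ℝ) (k : Fin n → ℝ) :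
    ‖coordFourier f k‖ ≤ ∫ x, ‖f x‖ :=
  (VectorFourier.norm_fourierIntegral_le_integral_norm ..).trans_eq (by simp)

lemma coordFourier_add {g : (Fin n → ℝ) → ℝ} (hf : Integrable f) (hg : Integrable g)
    (k : Fin n → ℝ) :
    coordFourier (fun x => f x + g x) k = coordFourier f k + coordFourier g k := by
  have hadd := VectorFourier.fourierIntegral_add (E := ℂ) (L := (dotCLM n).toLinearMap₁₂)
    continuous_fourierChar (dotCLM n).continuous₂ hf.ofReal hg.ofReal
  simp only [coordFourier, Complex.ofReal_add]
  exact congrFun hadd k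

lemma coordFourier_const_mul (c : ℝ) (f : (Fin n → ℝ) → ℝ) (k : Fin n → ℝ) :
    coordFourier (fun x => c * f x) k = c * coordFourier f k := by
  simp only [coordFourier, Complex.ofReal_mul]
  exact congrFun (VectorFourier.fourierIntegral_const_smul 𝐞 volume
    (dotCLM n).toLinearMap₁₂ (fun x => (f x : ℂ)) (c : ℂ)) k

lemma coordFourier_comp_smul {h : ℝ} (hh : 0 < h) (f : (Fin n → ℝ) → ℝ) (k : Fin n → ℝ) :
    coordFourier (fun x => f (h⁻¹ • x)) (h⁻¹ • k) = h ^ n * coordFourier f k := by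
  have hscale := Measure.integral_comp_inv_smul_of_nonneg (volume : Measure (Fin n → ℝ))
    (fun x => 𝐞 (-dotCLM n x k) • (f x : ℂ)) hh.le
  simp only [Module.finrank_fin_fun] at hscale
  simpa [coordFourier, VectorFourier.fourierIntegral] using hscale

lemma coordFourier_iterate_pd (hf : ContDiff ℝ M f)
    (hfi : ∀ m ≤ M, Integrable (iteratedFDeriv ℝ m f)) (j : Fin n) (k : Fin n → ℝ) :
    coordFourier ((pd j)^[M] f) k = (2 * π * Complex.I * k j) ^ M * coordFourier f k := by
  let F : (Fin n → ℝ) → ℂ := fun x => f x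
  have hF : ∀ m ≤ M, iteratedFDeriv ℝ m F =
      fun x => Complex.ofRealCLM.compContinuousMultilinearMap (iteratedFDeriv ℝ m f x) :=
    fun m hm => funext fun x => Complex.ofRealCLM.iteratedFDeriv_comp_left hf.contDiffAt
      (by exact_mod_cast hm)
  have hFi : ∀ m : ℕ, m ≤ (M : ℕ∞) → Integrable (iteratedFDeriv ℝ m F) := by
    intro m hm
    rw [hF m (by exact_mod_cast hm)]
    exact (ContinuousLinearMap.compContinuousMultilinearMapL ℝ
      (fun _ : Fin m => Fin n → ℝ) ℝ ℂ Complex.ofRealCLM).integrable_comp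
        (hfi m (by exact_mod_cast hm))
  have hpd : (fun x => (((pd j)^[M] f x : ℝ) : ℂ)) =
      fun x => iteratedFDeriv ℝ M F x fun _ => Pi.single j 1 := by
    ext x
    rw [hF M le_rfl, iterate_pd_apply hf]
    rfl
  have hFourier := VectorFourier.fourierIntegral_iteratedFDeriv (μ := volume) (dotCLM n)
    (Complex.ofRealCLM.contDiff.comp hf) hFi le_rfl
  calc coordFourier ((pd j)^[M] f) k
      = VectorFourier.fourierIntegral 𝐞 volume (dotCLM n).toLinearMap₁₂
          (iteratedFDeriv ℝ M F) k fun _ => Pi.single j 1 := by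
        rw [fourierIntegral_continuousMultilinearMap_apply' (hFi M le_rfl), coordFourier, hpd]
    _ = VectorFourier.fourierPowSMulRight (-(dotCLM n).flip) (coordFourier f) k M
          fun _ => Pi.single j 1 := congrArg (fun T => T k fun _ => Pi.single j 1) hFourier
    _ = (2 * π * Complex.I * k j) ^ M * coordFourier f k := by
        have hpair : (-(dotCLM n).flip) k (Pi.single j 1) = -k j := by
          simp [dotCLM_apply, Pi.single_apply]
        rw [VectorFourier.fourierPowSMulRight_apply]
        simp only [hpair, Finset.prod_const, Finset.card_univ, Fintype.card_fin, smul_eq_mul,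
          Complex.real_smul]
        rw [← mul_assoc, Complex.ofReal_pow, ← mul_pow]
        push_cast
        ring

lemma coordFourier_eq_coordFourier_iterate_pd (hf : ContDiff ℝ M f) (hfc : HasCompactSupport f)
    {j : Fin n} {k : Fin n → ℝ} (hk : k j ≠ 0) :
    coordFourier f k =
      (-Complex.I) ^ M * coordFourier ((pd j)^[M] f) k * (((2 * π * k j) ^ M : ℝ) : ℂ)⁻¹ := by
  have hfi : ∀ m ≤ M, Integrable (iteratedFDeriv ℝ m f) := fun m hm =>
    (hf.continuous_iteratedFDeriv (by exact_mod_cast hm)).integrable_of_hasCompactSupport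
      (hfc.iteratedFDeriv m)
  have hne : (((2 * π * k j) ^ M : ℝ) : ℂ) ≠ 0 := by
    exact_mod_cast pow_ne_zero M (mul_ne_zero two_pi_pos.ne' hk)
  have hI : (-Complex.I) ^ M * (2 * π * Complex.I * k j) ^ M = (((2 * π * k j) ^ M : ℝ) : ℂ) := by
    rw [← mul_pow, show -Complex.I * (2 * π * Complex.I * k j) =
      -(Complex.I * Complex.I) * (2 * π * k j) by ring, Complex.I_mul_I]
    push_cast
    ring
  rw [coordFourier_iterate_pd hf hfi, ← mul_assoc, hI, mul_comm, inv_mul_cancel_left₀ hne]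

lemma integrable_one_add_norm_rpow_sub (hdM : d + n < M) :
    Integrable fun x : Fin n → ℝ => (1 + ‖x‖) ^ (d - M) := by
  simpa using integrable_one_add_norm (μ := (volume : Measure (Fin n → ℝ))) (r := M - d)
    (by rw [Module.finrank_fin_fun]; linarith)

lemma SymbolBound.norm_iterate_pd_le (hf : ContDiff ℝ M f) (hfd : SymbolBound M d K f)
    (j : Fin n) (x : Fin n → ℝ) : ‖(pd j)^[M] f x‖ ≤ K * (1 + ‖x‖) ^ (d - M) :=
  (_root_.norm_iterate_pd_le hf j x).trans (hfd M le_rfl x)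

lemma SymbolBound.integrable_iterate_pd (hf : ContDiff ℝ M f) (hfd : SymbolBound M d K f)
    (hdM : d + n < M) (j : Fin n) : Integrable ((pd j)^[M] f) :=
  ((integrable_one_add_norm_rpow_sub hdM).const_mul K).mono'
    (continuous_iterate_pd hf j).aestronglyMeasurable (.of_forall (hfd.norm_iterate_pd_le hf j))

lemma SymbolBound.norm_coordFourier_iterate_pd_le (hf : ContDiff ℝ M f)
    (hfd : SymbolBound M d K f) (hdM : d + n < M) (j : Fin n) (k : Fin n → ℝ) :
    ‖coordFourier ((pd j)^[M] f) k‖ ≤ K * ∫ x : Fin n → ℝ, (1 + ‖x‖) ^ (d - M) := by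
  refine (norm_coordFourier_le _ k).trans ?_
  rw [← integral_const_mul]
  exact integral_mono (hfd.integrable_iterate_pd hf hdM j).norm
    ((integrable_one_add_norm_rpow_sub hdM).const_mul K) (hfd.norm_iterate_pd_le hf j)

lemma exists_norm_coordFourier_iterate_pd_dilation_mul_sub_le {N : ℕ} {g Φ : (Fin n → ℝ) → ℝ}
    (hg : ContDiff ℝ M g) (hgc : HasCompactSupport g) (hN : 0 < N) (hNM : N ≤ M)
    (hg0 : ∀ m, 1 ≤ m → m < N → iteratedFDeriv ℝ m g 0 = 0)
    (hΦ : ContDiff ℝ M Φ) (hΦd : SymbolBound M d K Φ) (hdM : d + n + N < M) :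
    ∃ C, ∀ h : ℝ, 0 < h → h ≤ 1 → ∀ (j : Fin n) (k : Fin n → ℝ),
      ‖coordFourier ((pd j)^[M] fun x => g (h • x) * Φ x) k -
        g 0 * coordFourier ((pd j)^[M] Φ) k‖ ≤ C * h ^ N := by
  obtain ⟨B, hB⟩ := exists_symbolBound_of_hasCompactSupport hg hgc N
  refine ⟨2 ^ M * (B * K) * ∫ x : Fin n → ℝ, (1 + ‖x‖) ^ (N + d - M), fun h hh hh1 j k => ?_⟩
  let R : (Fin n → ℝ) → ℝ := fun x => (g (h • x) - g 0) * Φ x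
  have hgh : ContDiff ℝ M fun x => g (h • x) - g 0 :=
    (hg.comp (contDiff_const_smul h)).sub contDiff_const
  have hR : ContDiff ℝ M R := hgh.mul hΦ
  have hRd : SymbolBound M (N + d) (2 ^ M * (B * h ^ N * K)) R :=
    .mul hgh (hB.dilation_sub_const hg hNM hg0 hN hh hh1) hΦ hΦd
  have hsplit : (pd j)^[M] (fun x => g (h • x) * Φ x) =
      fun x => (pd j)^[M] R x + g 0 * (pd j)^[M] Φ x := by
    rw [← iterate_pd_add_const_mul hR hΦ]
    congr 1
    ext x
    ring
  rw [hsplit, coordFourier_add (hRd.integrable_iterate_pd hR (by linarith) j)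
    ((hΦd.integrable_iterate_pd hΦ (by linarith) j).const_mul _), coordFourier_const_mul,
    add_sub_cancel_right]
  exact (hRd.norm_coordFourier_iterate_pd_le hR (by linarith) j k).trans_eq (by ring)

end Fourier

section EuclNorm

variable {n : ℕ}

lemma euclNorm_eq_norm (x : Fin n → ℝ) : euclNorm x = ‖WithLp.toLp 2 x‖ := by
  simp [euclNorm, EuclideanSpace.norm_eq]

lemma euclNorm_nonneg (x : Fin n → ℝ) : 0 ≤ euclNorm x := Real.sqrt_nonneg _

lemma euclNorm_smul (t : ℝ) (x : Fin n → ℝ) : euclNorm (t • x) = |t| * euclNorm x := by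
  simp only [euclNorm_eq_norm, WithLp.toLp_smul, norm_smul, norm_eq_abs]

lemma continuous_euclNorm : Continuous (euclNorm (n := n)) := by
  unfold euclNorm
  fun_prop

lemma norm_le_euclNorm (x : Fin n → ℝ) : ‖x‖ ≤ euclNorm x :=
  (pi_norm_le_iff_of_nonneg (euclNorm_nonneg x)).mpr fun l =>
    euclNorm_eq_norm x ▸ PiLp.norm_apply_le (WithLp.toLp 2 x) l

lemma euclNorm_pos {x : Fin n → ℝ} (hx : x ≠ 0) : 0 < euclNorm x :=
  (norm_pos_iff.mpr hx).trans_le (norm_le_euclNorm x)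

lemma euclNorm_le_sqrt_mul_abs {x : Fin n → ℝ} {j : Fin n} (hj : ∀ l, |x l| ≤ |x j|) :
    euclNorm x ≤ √n * |x j| := by
  have hsum : ∑ l, x l ^ 2 ≤ n * x j ^ 2 := by
    simpa using Finset.sum_le_card_nsmul Finset.univ _ _ fun l _ => sq_le_sq.mpr (hj l)
  calc euclNorm x ≤ √(n * x j ^ 2) := sqrt_le_sqrt hsum
    _ = √n * |x j| := by rw [sqrt_mul n.cast_nonneg, sqrt_sq_eq_abs]

lemma contDiffAt_euclNorm {x : Fin n → ℝ} (hx : x ≠ 0) {r : WithTop ℕ∞} :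
    ContDiffAt ℝ r euclNorm x := by
  have hsum : ∑ l, x l ^ 2 ≠ 0 := (sqrt_pos.mp (euclNorm_pos hx)).ne'
  exact ContDiffAt.sqrt (f := fun y : Fin n → ℝ => ∑ l, y l ^ 2) (by fun_prop) hsum

lemma tendsto_euclNorm_cocompact_atTop : Tendsto (euclNorm (n := n)) (cocompact _) atTop :=
  tendsto_atTop_mono norm_le_euclNorm tendsto_norm_cocompact_atTop

lemma eventuallyEq_zero_of_forall_euclNorm_le {f : (Fin n → ℝ) → ℝ} {r : ℝ} (hr : 0 < r)
    (hf : ∀ x, euclNorm x ≤ r → f x = 0) : f =ᶠ[𝓝 0] 0 := by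
  have hlt : ∀ᶠ x in 𝓝 (0 : Fin n → ℝ), euclNorm x < r :=
    continuous_euclNorm.continuousAt.eventually_lt_const (by simpa [euclNorm])
  exact hlt.mono fun x hx => hf x hx.le

/-- The symbol `x^{2ξ} x_i² / |x|^β`; the `s_ξ` of the theorem has `x_i = x₁` and `β = n + α`. -/
noncomputable def modeSymbol (ξ : Fin n → ℕ) (i : Fin n) (β : ℝ) (x : Fin n → ℝ) : ℝ :=
  (∏ l, x l ^ (2 * ξ l)) * x i ^ 2 / euclNorm x ^ β

lemma modeSymbol_smul (ξ : Fin n → ℕ) (i : Fin n) (β : ℝ) {t : ℝ} (ht : 0 < t)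
    (x : Fin n → ℝ) :
    modeSymbol ξ i β (t • x) = t ^ (2 * ∑ l, (ξ l : ℝ) + 2 - β) • modeSymbol ξ i β x := by
  have hexp : t ^ (2 * ∑ l, (ξ l : ℝ) + 2 - β) = t ^ (∑ l, 2 * ξ l) * t ^ 2 / t ^ β := by
    rw [rpow_sub ht, rpow_add ht, ← Finset.mul_sum, ← rpow_natCast, ← rpow_natCast]
    push_cast
    rfl
  simp only [modeSymbol, euclNorm_smul, abs_of_pos ht, mul_rpow ht.le (euclNorm_nonneg x),
    Pi.smul_apply, smul_eq_mul, mul_pow, Finset.prod_mul_distrib, Finset.prod_pow_eq_pow_sum, hexp]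
  rw [div_mul_div_comm, mul_mul_mul_comm]

lemma contDiffAt_modeSymbol (ξ : Fin n → ℕ) (i : Fin n) (β : ℝ) {x : Fin n → ℝ} (hx : x ≠ 0)
    {r : WithTop ℕ∞} : ContDiffAt ℝ r (modeSymbol ξ i β) x := by
  have hprod : ContDiffAt ℝ r (fun y : Fin n → ℝ => ∏ l, y l ^ (2 * ξ l)) x :=
    contDiffAt_prod fun l _ => by fun_prop
  have hpos := euclNorm_pos hx
  exact (hprod.mul (by fun_prop)).div ((contDiffAt_euclNorm hx).rpow_const_of_ne hpos.ne')
    (rpow_pos_of_pos hpos β).ne'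

end EuclNorm

section HomogeneousSymbol

variable {n : ℕ} {d : ℝ} {s Ψ g : (Fin n → ℝ) → ℝ}

lemma contDiff_mul_of_eventuallyEq_zero {r : WithTop ℕ∞} (hΨ : ContDiff ℝ r Ψ)
    (hΨ0 : Ψ =ᶠ[𝓝 0] 0) (hs : ∀ x ≠ 0, ContDiffAt ℝ r s x) : ContDiff ℝ r fun x => Ψ x * s x := by
  refine contDiff_iff_contDiffAt.mpr fun x => ?_
  rcases eq_or_ne x 0 with rfl | hx
  · refine (contDiffAt_const (c := (0 : ℝ))).congr_of_eventuallyEq ?_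
    filter_upwards [hΨ0] with y hy
    rw [hy, Pi.zero_apply, zero_mul]
  · exact hΨ.contDiffAt.mul (hs x hx)

lemma coordFourier_dilated_cutoff {h : ℝ} (hh : 0 < h)
    (hs_hom : ∀ t : ℝ, 0 < t → ∀ x, s (t • x) = t ^ d • s x) (k : Fin n → ℝ) :
    coordFourier (fun x => g x * s x * Ψ (h⁻¹ • x)) (h⁻¹ • k) =
      ((h ^ (d + n) : ℝ) : ℂ) * coordFourier (fun y => g (h • y) * (Ψ y * s y)) k := by
  let F : (Fin n → ℝ) → ℝ := fun y => g (h • y) * (Ψ y * s y)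
  have hF : (fun x => g x * s x * Ψ (h⁻¹ • x)) = fun x => h ^ d * F (h⁻¹ • x) := by
    ext x
    have hsx : s x = h ^ d * s (h⁻¹ • x) := by
      rw [← smul_eq_mul, ← hs_hom h hh, smul_inv_smul₀ hh.ne']
    simp only [F, smul_inv_smul₀ hh.ne', hsx]
    ring
  rw [hF, coordFourier_const_mul, coordFourier_comp_smul hh, rpow_add hh, rpow_natCast]
  push_cast
  ring

lemma ne_zero_of_forall_abs_le {k : Fin n → ℝ} (hk : k ≠ 0) {j : Fin n}
    (hj : ∀ l, |k l| ≤ |k j|) : k j ≠ 0 := fun h0 =>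
  hk (funext fun l => abs_nonpos_iff.mp ((hj l).trans_eq (by rw [h0, abs_zero])))

lemma norm_inv_two_pi_mul_pow_le {k : Fin n → ℝ} (hk : k ≠ 0) {j : Fin n}
    (hj : ∀ l, |k l| ≤ |k j|) (M : ℕ) :
    ‖(((2 * π * k j) ^ M : ℝ) : ℂ)⁻¹‖ ≤ √n ^ M / euclNorm k ^ M := by
  have hpos := euclNorm_pos hk
  have hkj : k j ≠ 0 := ne_zero_of_forall_abs_le hk hj
  have hfreq : euclNorm k ≤ √n * |2 * π * k j| := by
    refine (euclNorm_le_sqrt_mul_abs hj).trans ?_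
    rw [abs_mul, abs_of_pos two_pi_pos]
    gcongr
    exact le_mul_of_one_le_left (abs_nonneg _) (by linarith [pi_gt_three])
  have hne : 0 < |2 * π * k j| := abs_pos.mpr (mul_ne_zero two_pi_pos.ne' hkj)
  rw [norm_inv, Complex.norm_real, norm_pow, norm_eq_abs, inv_eq_one_div,
    div_le_div_iff₀ (pow_pos hne M) (pow_pos hpos M), one_mul, ← mul_pow]
  gcongr

end HomogeneousSymbol

theorem fourier_mode_estimate_general {n M N : ℕ} {d : ℝ} {s Ψ g : (Fin n → ℝ) → ℝ}
    (hs : ∀ x ≠ 0, ContDiffAt ℝ M s x)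
    (hs_hom : ∀ t : ℝ, 0 < t → ∀ x, s (t • x) = t ^ d • s x)
    (hΨ : ContDiff ℝ M Ψ) (hΨ0 : Ψ =ᶠ[𝓝 0] 0) (hΨ1 : Ψ =ᶠ[cocompact _] 1)
    (hg : ContDiff ℝ M g) (hgc : HasCompactSupport g)
    (hgd : ∀ γ : Fin n → ℕ, 1 ≤ ∑ l, γ l → ∑ l, γ l < N → md γ g 0 = 0)
    (hN : 0 < N) (hNM : N ≤ M) (hdM : d + n + N < M) :
    ∃ C > (0 : ℝ), ∀ h : ℝ, 0 < h → h ≤ 1 → ∀ k : Fin n → ℝ, k ≠ 0 →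
      ∀ j : Fin n, (∀ l, |k l| ≤ |k j|) →
      ‖coordFourier (fun x => g x * s x * Ψ (h⁻¹ • x)) (h⁻¹ • k) -
          g 0 * ((-Complex.I) ^ M * coordFourier ((pd j)^[M] fun y => Ψ y * s y) k) *
            ((h ^ (d + n) : ℝ) : ℂ) * (((2 * π * k j) ^ M : ℝ) : ℂ)⁻¹‖ ≤
        C * h ^ (d + n + N) / euclNorm k ^ M := by
  let Φ : (Fin n → ℝ) → ℝ := fun y => Ψ y * s y
  have hΦ : ContDiff ℝ M Φ := contDiff_mul_of_eventuallyEq_zero hΨ hΨ0 hs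
  have hΦs : Φ =ᶠ[cocompact _] s := by
    filter_upwards [hΨ1] with y hy
    simp only [Φ, hy, Pi.one_apply, one_mul]
  obtain ⟨K, hK⟩ := exists_symbolBound_of_eventuallyEq_homogeneous hs hs_hom hΦ hΦs
  have hg0 : ∀ m, 1 ≤ m → m < N → iteratedFDeriv ℝ m g 0 = 0 := fun m hm1 hmN =>
    iteratedFDeriv_eq_zero_of_md_eq_zero (hg.of_le (by exact_mod_cast (hmN.trans_le hNM).le))
      fun γ hγ => hgd γ (hγ ▸ hm1) (hγ ▸ hmN)
  obtain ⟨C, hC⟩ :=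
    exists_norm_coordFourier_iterate_pd_dilation_mul_sub_le hg hgc hN hNM hg0 hΦ hK hdM
  refine ⟨max (C * √n ^ M) 1, by positivity, fun h hh hh1 k hk j hj => ?_⟩
  let G : (Fin n → ℝ) → ℝ := fun y => g (h • y) * Φ y
  have hG : ContDiff ℝ M G := (hg.comp (contDiff_const_smul h)).mul hΦ
  have hGc : HasCompactSupport G := (hgc.comp_smul hh.ne').mul_right
  have hpos := euclNorm_pos hk
  rw [coordFourier_dilated_cutoff hh hs_hom,
    coordFourier_eq_coordFourier_iterate_pd hG hGc (ne_zero_of_forall_abs_le hk hj)]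
  calc _ = ‖((h ^ (d + n) : ℝ) : ℂ) * (-Complex.I) ^ M * (((2 * π * k j) ^ M : ℝ) : ℂ)⁻¹ *
        (coordFourier ((pd j)^[M] G) k - g 0 * coordFourier ((pd j)^[M] Φ) k)‖ := by
        congr 1
        ring
    _ ≤ h ^ (d + n) * (√n ^ M / euclNorm k ^ M) * (C * h ^ N) := by
        have hpow : ‖((h ^ (d + n) : ℝ) : ℂ) * (-Complex.I) ^ M‖ = h ^ (d + n) := by
          simp [abs_of_pos (rpow_pos_of_pos hh _)]
        rw [norm_mul, norm_mul, hpow]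
        gcongr
        · exact norm_inv_two_pi_mul_pow_le hk hj M
        · exact hC h hh hh1 j k
    _ = C * √n ^ M * h ^ (d + n + N) / euclNorm k ^ M := by
        rw [rpow_add_natCast hh.ne' (d + n) N]
        ring
    _ ≤ _ := by
        gcongr
        exact le_max_left _ _

/-- pointwise estimate of the Fourier-type integrals `I_ξ(h,k)` in terms of
the quantity `W(ξ,k)`. -/
theorem fourier_mode_estimate
    (n : ℕ) (hn : 0 < n) (p : ℕ) (α : ℝ) (hα0 : 0 < α) (hα2 : α < 2)
    (M : ℕ) (hM : M = max (4 * p + 4) (n + 1))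
    (ξ : Fin n → ℕ) (hξ : (∑ j, ξ j) ≤ p)
    (Ψ : (Fin n → ℝ) → ℝ) (hΨ : ContDiff ℝ (⊤ : ℕ∞) Ψ)
    (hΨrad : ∀ x y, euclNorm x = euclNorm y → Ψ x = Ψ y)
    (hΨ0 : ∀ x, euclNorm x ≤ 1 / 2 → Ψ x = 0)
    (hΨ1 : ∀ x, 1 ≤ euclNorm x → Ψ x = 1)
    (Nsm : ℕ) (hNsm : M ≤ Nsm)
    (g : (Fin n → ℝ) → ℝ) (hg : ContDiff ℝ (Nsm : ℕ∞) g) (hgc : HasCompactSupport g)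
    (hgd : ∀ k : Fin n → ℕ, 1 ≤ ∑ j, k j → ∑ j, k j ≤ 2 * p + 1 → md k g 0 = 0) :
    ∃ C > (0:ℝ), ∀ h : ℝ, 0 < h → h ≤ 1 → ∀ k : Fin n → ℤ, k ≠ 0 →
      ∀ j : Fin n, (∀ l, |k l| ≤ |k j|) →
      ‖(∫ x : Fin n → ℝ,
            Complex.exp (-2 * (Real.pi : ℂ) * Complex.I * (∑ l, (k l : ℂ) * (x l : ℂ)) / (h : ℂ)) *
              ((g x * ((∏ i, x i ^ (2 * ξ i)) * x ⟨0, hn⟩ ^ 2 / euclNorm x ^ ((n : ℝ) + α)) *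
                  Ψ (fun i => x i / h) : ℝ) : ℂ)) -
          (g 0 : ℂ) *
            ((-Complex.I) ^ M *
              ∫ x : Fin n → ℝ,
                (((pd j)^[M] (fun y =>
                    Ψ y * ((∏ i, y i ^ (2 * ξ i)) * y ⟨0, hn⟩ ^ 2 / euclNorm y ^ ((n : ℝ) + α))) x
                  : ℝ) : ℂ) *
                  Complex.exp (-2 * (Real.pi : ℂ) * Complex.I * (∑ l, (k l : ℂ) * (x l : ℂ)))) *
            ((h ^ (2 * (∑ i, (ξ i : ℝ)) + 2 - α) : ℝ) : ℂ) *
            ((((2 * Real.pi * (k j : ℝ)) ^ M : ℝ) : ℂ))⁻¹‖ ≤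
        C * (h ^ (2 * (p : ℝ) + 4 - α + 2 * ∑ i, (ξ i : ℝ)) + h ^ (M : ℝ)) /
          euclNorm (fun l => (k l : ℝ)) ^ M := by
  have hdM : 2 * ∑ i, (ξ i : ℝ) + 2 - (n + α) + n + (2 * p + 2 : ℕ) < M := by
    have hξM : (2 * ∑ i, (ξ i : ℝ) + 2 + (2 * p + 2 : ℕ)) ≤ M := by
      exact_mod_cast (by lia : 2 * ∑ i, ξ i + 2 + (2 * p + 2) ≤ M)
    linarith
  obtain ⟨C, hC0, hC⟩ := fourier_mode_estimate_general
    (fun x hx => contDiffAt_modeSymbol ξ ⟨0, hn⟩ (n + α) hx) (fun t ht => modeSymbol_smul ξ _ _ ht)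
    (hΨ.of_le (by exact_mod_cast le_top)) (eventuallyEq_zero_of_forall_euclNorm_le one_half_pos hΨ0)
    ((tendsto_euclNorm_cocompact_atTop.eventually_ge_atTop 1).mono hΨ1)
    (hg.of_le (by exact_mod_cast hNsm)) hgc (fun γ hγ1 hγ => hgd γ hγ1 (by lia))
    (by lia) (by lia) hdM
  refine ⟨C, hC0, fun h hh hh1 k hk j hj => ?_⟩
  have hest := hC h hh hh1 (fun l => k l) (by simpa [funext_iff] using hk) j (by exact_mod_cast hj)
  rw [coordFourier_inv_smul_apply, coordFourier_apply,
    show 2 * ∑ i, (ξ i : ℝ) + 2 - (n + α) + n = 2 * ∑ i, (ξ i : ℝ) + 2 - α by ring,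
    show 2 * ∑ i, (ξ i : ℝ) + 2 - α + (2 * p + 2 : ℕ) = 2 * p + 4 - α + 2 * ∑ i, (ξ i : ℝ) by
      push_cast; ring] at hest
  simp only [Complex.ofReal_intCast] at hest
  simp only [div_eq_inv_mul (_ : ℝ) h]
  refine hest.trans ?_
  gcongr
  · exact pow_nonneg (euclNorm_nonneg _) M
  · exact le_add_of_nonneg_right (rpow_nonneg hh.le _)
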